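/- Fix p ≥ 1 and 0 < ε < 1. Let μ_1, ..., μ_k be finitely supported probability measures on ℝ^d and let π : ℝ^d → ℝ^m be a map such that (1−ε)·‖x−y‖ ≤ ‖π(x)−π(y)‖ ≤ (1+ε)·‖x−y‖ for all x, y in the union of the supports of the μ_i. Let OPT = inf over ν supported on at most n points of (1/k)·Σ_i W_p(μ_i, ν)^p, and OPT' the same infimum for the pushforward measures π_*μ_i in ℝ^m. Then OPT ≤ (1/(1−ε))^p · OPT'. -/

import Mathlib

open MeasureTheory

/-- The `p`-Wasserstein distance with Euclidean (norm) ground cost, defined as the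
infimum over couplings of the `p`-th root of the transport cost. -/
noncomputable def wassersteinDist {E : Type*} [NormedAddCommGroup E] [MeasurableSpace E]
    (p : ℝ) (μ ν : Measure E) : ℝ :=
  sInf {r : ℝ | ∃ γ : Measure (E × E), γ.map Prod.fst = μ ∧ γ.map Prod.snd = ν ∧
    r = (∫ z, ‖z.1 - z.2‖ ^ p ∂γ) ^ (1 / p)}

/-- One-point finite Kirszbraun extension, via duality on the simplex. -/
lemma kirszbraun_point {ι E F : Type*} [Fintype ι]
    [NormedAddCommGroup E] [InnerProductSpace ℝ E] [NormedAddCommGroup F] [InnerProductSpace ℝ F]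
    (x : ι → E) (y : ι → F) (h : ∀ i j, ‖x i - x j‖ ≤ ‖y i - y j‖) :
    ∃ z : E, ∀ i, ‖z - x i‖ ≤ ‖y i‖ := by
  classical
  rcases isEmpty_or_nonempty ι with hι | hι
  · exact ⟨0, fun i => hι.elim i⟩
  let q : ι → ℝ := fun i => ‖x i‖ ^ 2 - ‖y i‖ ^ 2
  let D : (ι → ℝ) → ℝ := fun l => ∑ i, l i * q i - ‖∑ i, l i • x i‖ ^ 2
  have hD : Continuous D := by fun_prop
  obtain ⟨l, hl, hmax⟩ := (isCompact_stdSimplex ℝ ι).exists_isMaxOn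
    ⟨_, single_mem_stdSimplex ℝ (Classical.arbitrary ι)⟩ hD.continuousOn
  set X := ∑ i, l i • x i with hX
  set Y := ∑ i, l i • y i with hY
  set c := ∑ i, l i * q i with hc
  have hl0 := hl.1
  have hl1 : ∑ i, l i = 1 := hl.2
  have hDl : D l = c - ‖X‖ ^ 2 := rfl
  -- the dual value is nonpositive
  have hXX : ‖X‖ ^ 2 = ∑ i, ∑ j, l i * l j * inner ℝ (x i) (x j) := by
    rw [← real_inner_self_eq_norm_sq, hX, sum_inner]
    refine Finset.sum_congr rfl fun i _ => ?_
    rw [inner_sum]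
    refine Finset.sum_congr rfl fun j _ => ?_
    rw [real_inner_smul_left, real_inner_smul_right]; ring
  have hYY : ‖Y‖ ^ 2 = ∑ i, ∑ j, l i * l j * inner ℝ (y i) (y j) := by
    rw [← real_inner_self_eq_norm_sq, hY, sum_inner]
    refine Finset.sum_congr rfl fun i _ => ?_
    rw [inner_sum]
    refine Finset.sum_congr rfl fun j _ => ?_
    rw [real_inner_smul_left, real_inner_smul_right]; ring
  have hc1 : c = ∑ i, ∑ j, l i * l j * q i := by
    rw [hc]
    refine Finset.sum_congr rfl fun i _ => ?_
    have : ∑ j, l i * l j * q i = (l i * q i) * ∑ j, l j := by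
      rw [Finset.mul_sum]; exact Finset.sum_congr rfl fun j _ => by ring
    rw [this, hl1, mul_one]
  have hc2 : c = ∑ i, ∑ j, l i * l j * q j := by
    rw [hc1, Finset.sum_comm]
    exact Finset.sum_congr rfl fun i _ => Finset.sum_congr rfl fun j _ => by ring
  have key : 2 * c ≤ 2 * ‖X‖ ^ 2 - 2 * ‖Y‖ ^ 2 := by
    have : 2 * c = ∑ i, ∑ j, l i * l j * (q i + q j) := by
      rw [two_mul]; nth_rewrite 1 [hc1]; rw [hc2, ← Finset.sum_add_distrib]
      refine Finset.sum_congr rfl fun i _ => ?_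
      rw [← Finset.sum_add_distrib]
      exact Finset.sum_congr rfl fun j _ => by ring
    rw [this, hXX, hYY, Finset.mul_sum, Finset.mul_sum, ← Finset.sum_sub_distrib]
    refine Finset.sum_le_sum fun i _ => ?_
    rw [Finset.mul_sum, Finset.mul_sum, ← Finset.sum_sub_distrib]
    refine Finset.sum_le_sum fun j _ => ?_
    have h1 := norm_sub_sq_real (x i) (x j)
    have h2 := norm_sub_sq_real (y i) (y j)
    have h3 : ‖x i - x j‖ ^ 2 ≤ ‖y i - y j‖ ^ 2 := by gcongr; exact h i j
    have h4 : q i + q j ≤ 2 * inner ℝ (x i) (x j) - 2 * inner ℝ (y i) (y j) := by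
      simp only [q]; linarith
    have := mul_le_mul_of_nonneg_left h4 (mul_nonneg (hl0 i) (hl0 j))
    linarith
  refine ⟨X, fun i => ?_⟩
  have kkt : ∀ t : ℝ, 0 < t → t ≤ 1 →
      q i - c - 2 * inner ℝ X (x i - X) ≤ t * ‖x i - X‖ ^ 2 := by
    intro t ht0 ht1
    have hmem : (1 - t) • l + t • (Pi.single i 1 : ι → ℝ) ∈ stdSimplex ℝ ι :=
      convex_stdSimplex ℝ ι hl (single_mem_stdSimplex ℝ i) (by linarith) ht0.le (by ring)
    have h1 : D ((1 - t) • l + t • (Pi.single i 1 : ι → ℝ)) ≤ D l := hmax hmem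
    have e1 : ∑ j, ((1 - t) • l + t • (Pi.single i 1 : ι → ℝ)) j * q j
        = (1 - t) * c + t * q i := by
      have : ∀ j, ((1 - t) • l + t • (Pi.single i 1 : ι → ℝ)) j * q j
        = (1 - t) * (l j * q j) + t * ((Pi.single i 1 : ι → ℝ) j * q j) := by
        intro j; simp only [Pi.add_apply, Pi.smul_apply, smul_eq_mul]; ring
      simp_rw [this, Finset.sum_add_distrib, ← Finset.mul_sum]
      simp [Pi.single_apply, hc]
    have e2 : ∑ j, ((1 - t) • l + t • (Pi.single i 1 : ι → ℝ)) j • x j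
        = X + t • (x i - X) := by
      have : ∀ j, ((1 - t) • l + t • (Pi.single i 1 : ι → ℝ)) j • x j
        = (1 - t) • (l j • x j) + t • ((Pi.single i 1 : ι → ℝ) j • x j) := by
        intro j; simp only [Pi.add_apply, Pi.smul_apply, smul_eq_mul, add_smul, mul_smul]
      simp_rw [this, Finset.sum_add_distrib, ← Finset.smul_sum]
      simp only [Pi.single_apply, ite_smul, one_smul, zero_smul, Finset.sum_ite_eq',
        Finset.mem_univ, if_true, ← hX]
      module
    have e3 : D ((1 - t) • l + t • (Pi.single i 1 : ι → ℝ)) =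
        (1 - t) * c + t * q i - ‖X + t • (x i - X)‖ ^ 2 := by
      simp only [D]; rw [e1, e2]
    rw [e3, hDl, norm_add_sq_real, real_inner_smul_right, norm_smul, mul_pow,
      Real.norm_eq_abs, sq_abs] at h1
    have : t * (q i - c - 2 * inner ℝ X (x i - X)) ≤ t * (t * ‖x i - X‖ ^ 2) := by nlinarith
    exact le_of_mul_le_mul_left this ht0
  have kkt0 : q i - c - 2 * inner ℝ X (x i - X) ≤ 0 := by
    by_contra! hcon
    set a := q i - c - 2 * inner ℝ X (x i - X)
    set b := ‖x i - X‖ ^ 2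
    have hb : 0 ≤ b := by positivity
    have h1 := kkt (min 1 (a / (2 * (b + 1)))) (by positivity) (min_le_left _ _)
    have h2 : min 1 (a / (2 * (b + 1))) * b ≤ a / (2 * (b + 1)) * b := by
      gcongr; exact min_le_right _ _
    have h3 : a / (2 * (b + 1)) * b < a := by
      rw [div_mul_eq_mul_div, div_lt_iff₀ (by positivity)]; nlinarith
    linarith
  rw [inner_sub_right, real_inner_self_eq_norm_sq] at kkt0
  have h5 := norm_sub_sq_real X (x i)
  have : ‖X - x i‖ ^ 2 ≤ ‖y i‖ ^ 2 := by
    have := sq_nonneg ‖Y‖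
    simp only [q] at kkt0
    linarith
  exact (sq_le_sq₀ (norm_nonneg _) (norm_nonneg _)).1 this

lemma measurable_ite_finset {E F : Type*} [MeasurableSpace E] [MeasurableSingletonClass E]
    [MeasurableSpace F] [Zero F] (t : Set E) (ht : t.Finite) (f : E → F)
    (hf : ∀ x, x ∉ t → f x = 0) : Measurable f := by
  intro B _
  by_cases h0 : (0 : F) ∈ B
  · have : (f ⁻¹' B)ᶜ.Finite := ht.subset fun x hx => by
      by_contra hxt; exact hx (by simpa [hf x hxt] using h0)
    simpa using this.measurableSet.compl
  · exact (ht.subset fun x hx => by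
      by_contra hxt; exact h0 (by simpa [hf x hxt] using hx)).measurableSet

/-- Pushforward bound for the Wasserstein distance. -/
lemma wasserstein_push {d m : ℕ} (p L : ℝ) (hp : 1 ≤ p) (hL : 0 < L)
    (μ : Measure (EuclideanSpace ℝ (Fin d))) (μ' ν' : Measure (EuclideanSpace ℝ (Fin m)))
    [IsProbabilityMeasure μ'] [IsProbabilityMeasure ν']
    (g G : EuclideanSpace ℝ (Fin m) → EuclideanSpace ℝ (Fin d))
    (hg : Measurable g) (hG : Measurable G) (hgμ : μ'.map g = μ)
    (a b : Finset (EuclideanSpace ℝ (Fin m))) (ha : μ' (↑a)ᶜ = 0) (hb : ν' (↑b)ᶜ = 0)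
    (hgG : ∀ u ∈ a, ∀ v ∈ b, ‖g u - G v‖ ≤ L * ‖u - v‖) :
    wassersteinDist p μ (ν'.map G) ≤ L * wassersteinDist p μ' ν' := by
  have hp0 : 0 < p := by linarith
  rw [mul_comm, ← div_le_iff₀ hL]
  refine le_csInf ⟨_, μ'.prod ν', by simp, by simp, rfl⟩ ?_
  rintro r ⟨γ, h1, h2, rfl⟩
  rw [div_le_iff₀ hL]
  have hγ : IsProbabilityMeasure γ := by
    constructor
    rw [← Set.preimage_univ (f := Prod.fst), ← Measure.map_apply measurable_fst .univ, h1]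
    simp
  have ae1 : ∀ᵐ z ∂γ, z.1 ∈ a := by
    have : ∀ᵐ u ∂(γ.map Prod.fst), u ∈ a := by rw [h1]; exact ha
    exact ae_of_ae_map measurable_fst.aemeasurable this
  have ae2 : ∀ᵐ z ∂γ, z.2 ∈ b := by
    have : ∀ᵐ u ∂(γ.map Prod.snd), u ∈ b := by rw [h2]; exact hb
    exact ae_of_ae_map measurable_snd.aemeasurable this
  have hm : Measurable (Prod.map g G) := hg.prodMap hG
  have hle : wassersteinDist p μ (ν'.map G) ≤
      (∫ z, ‖z.1 - z.2‖ ^ p ∂(γ.map (Prod.map g G))) ^ (1 / p) := by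
    refine csInf_le ⟨0, ?_⟩ ⟨_, ?_, ?_, rfl⟩
    · rintro r ⟨γ', -, -, rfl⟩
      exact Real.rpow_nonneg (integral_nonneg fun z => by positivity) _
    · rw [Measure.map_map measurable_fst hm, ← hgμ, ← h1, Measure.map_map hg measurable_fst]
      rfl
    · rw [Measure.map_map measurable_snd hm, ← h2, Measure.map_map hG measurable_snd]
      rfl
  refine hle.trans ?_
  have hmeas : ∀ k : ℕ, Measurable (fun z : EuclideanSpace ℝ (Fin k) × EuclideanSpace ℝ (Fin k) =>
      ‖z.1 - z.2‖ ^ p) := fun k => by fun_prop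
  rw [integral_map hm.aemeasurable (hmeas d).aestronglyMeasurable]
  have hint : Integrable (fun z : EuclideanSpace ℝ (Fin m) × EuclideanSpace ℝ (Fin m) =>
      ‖z.1 - z.2‖ ^ p) γ := by
    refine Integrable.of_bound (hmeas m).aestronglyMeasurable
      (∑ z ∈ a ×ˢ b, ‖z.1 - z.2‖ ^ p) ?_
    filter_upwards [ae1, ae2] with z hz1 hz2
    rw [Real.norm_of_nonneg (by positivity)]
    exact Finset.single_le_sum (f := fun z : EuclideanSpace ℝ (Fin m) × EuclideanSpace ℝ (Fin m) =>
      ‖z.1 - z.2‖ ^ p) (fun i _ => by positivity) (Finset.mem_product.2 ⟨hz1, hz2⟩)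
  have hI : ∫ z, ‖(Prod.map g G z).1 - (Prod.map g G z).2‖ ^ p ∂γ ≤
      L ^ p * ∫ z, ‖z.1 - z.2‖ ^ p ∂γ := by
    rw [← integral_const_mul]
    refine integral_mono_of_nonneg (.of_forall fun z => by positivity) (hint.const_mul _) ?_
    filter_upwards [ae1, ae2] with z hz1 hz2
    rw [← Real.mul_rpow hL.le (norm_nonneg _)]
    exact Real.rpow_le_rpow (norm_nonneg _) (hgG _ hz1 _ hz2) hp0.le
  calc _ ≤ (L ^ p * ∫ z, ‖z.1 - z.2‖ ^ p ∂γ) ^ (1 / p) :=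
        Real.rpow_le_rpow (integral_nonneg fun z => by positivity) hI (by positivity)
    _ = _ := by
      rw [Real.mul_rpow (by positivity) (integral_nonneg fun z => by positivity),
        ← Real.rpow_mul hL.le, mul_one_div_cancel hp0.ne', Real.rpow_one, mul_comm]

lemma wasserstein_nonneg {E : Type*} [NormedAddCommGroup E] [MeasurableSpace E]
    (p : ℝ) (μ ν : Measure E) : 0 ≤ wassersteinDist p μ ν := by
  refine Real.sInf_nonneg ?_
  rintro r ⟨γ', -, -, rfl⟩
  exact Real.rpow_nonneg (integral_nonneg fun z => by positivity) _

theorem barycenter_cost_preserved_by_biLipschitz_projection {d m k n : ℕ} (hk : 0 < k)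
    (p ε : ℝ) (hp : 1 ≤ p) (hε : 0 < ε) (hε1 : ε < 1)
    (μs : Fin k → Measure (EuclideanSpace ℝ (Fin d)))
    (hprob : ∀ i, IsProbabilityMeasure (μs i))
    (s : Fin k → Finset (EuclideanSpace ℝ (Fin d)))
    (hs : ∀ i, μs i (↑(s i))ᶜ = 0)
    (π : EuclideanSpace ℝ (Fin d) → EuclideanSpace ℝ (Fin m)) (hπm : Measurable π)
    (hπ : ∀ x ∈ ⋃ i, (↑(s i) : Set (EuclideanSpace ℝ (Fin d))),
          ∀ y ∈ ⋃ i, (↑(s i) : Set (EuclideanSpace ℝ (Fin d))),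
      (1 - ε) * ‖x - y‖ ≤ ‖π x - π y‖ ∧ ‖π x - π y‖ ≤ (1 + ε) * ‖x - y‖) :
    sInf {r : ℝ | ∃ ν : Measure (EuclideanSpace ℝ (Fin d)), IsProbabilityMeasure ν ∧
        (∃ t : Finset (EuclideanSpace ℝ (Fin d)), t.card ≤ n ∧ ν (↑t)ᶜ = 0) ∧
        r = (1 / (k : ℝ)) * ∑ i, wassersteinDist p (μs i) ν ^ p} ≤
      (1 / (1 - ε)) ^ p *
        sInf {r : ℝ | ∃ ν : Measure (EuclideanSpace ℝ (Fin m)), IsProbabilityMeasure ν ∧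
          (∃ t : Finset (EuclideanSpace ℝ (Fin m)), t.card ≤ n ∧ ν (↑t)ᶜ = 0) ∧
          r = (1 / (k : ℝ)) * ∑ i, wassersteinDist p ((μs i).map π) ν ^ p} := by
  classical
  have hp0 : 0 < p := by linarith
  have he : 0 < 1 - ε := by linarith
  set L : ℝ := 1 / (1 - ε) with hLdef
  have hL : 0 < L := by positivity
  have hk' : (0 : ℝ) < k := by exact_mod_cast hk
  rcases Nat.eq_zero_or_pos n with hn | hn
  · subst hn
    have hempty : ∀ (e : ℕ) (C : Measure (EuclideanSpace ℝ (Fin e)) → ℝ),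
        {r : ℝ | ∃ ν : Measure (EuclideanSpace ℝ (Fin e)), IsProbabilityMeasure ν ∧
          (∃ t : Finset (EuclideanSpace ℝ (Fin e)), t.card ≤ 0 ∧ ν (↑t)ᶜ = 0) ∧
          r = C ν} = ∅ := by
      intro e C
      refine Set.eq_empty_of_forall_notMem ?_
      rintro r ⟨ν, hν, ⟨t, ht, ht0⟩, -⟩
      have : t = ∅ := by simpa using ht
      subst this
      simp at ht0
    rw [hempty d (fun ν => (1 / (k : ℝ)) * ∑ i, wassersteinDist p (μs i) ν ^ p),
      hempty m (fun ν => (1 / (k : ℝ)) * ∑ i, wassersteinDist p ((μs i).map π) ν ^ p)]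
    simp
  have hLp : 0 < L ^ p := by positivity
  rw [mul_comm, ← div_le_iff₀ hLp]
  refine le_csInf ⟨_, Measure.dirac 0, inferInstance, ⟨{0}, by rw [Finset.card_singleton]; exact hn, by simp⟩, rfl⟩ ?_
  rintro r ⟨ν', hν', ⟨t, htn, ht0⟩, rfl⟩
  rw [div_le_iff₀ hLp]
  -- the inverse of π on the union of the supports
  set S : Finset (EuclideanSpace ℝ (Fin d)) := Finset.univ.biUnion s with hS
  have hπS : ∀ x ∈ S, ∀ y ∈ S, (1 - ε) * ‖x - y‖ ≤ ‖π x - π y‖ := by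
    intro x hx y hy
    exact (hπ x (by simpa [hS] using hx) y (by simpa [hS] using hy)).1
  have hLS : ∀ x ∈ S, ∀ y ∈ S, ‖x - y‖ ≤ L * ‖π x - π y‖ := by
    intro x hx y hy
    rw [hLdef, one_div, inv_mul_eq_div, le_div_iff₀ he, mul_comm]
    exact hπS x hx y hy
  have hinj : Set.InjOn π S := by
    intro x hx y hy hxy
    have := hLS x hx y hy
    rw [hxy, sub_self, norm_zero, mul_zero] at this
    exact sub_eq_zero.1 (norm_le_zero_iff.1 this)
  let g : EuclideanSpace ℝ (Fin m) → EuclideanSpace ℝ (Fin d) := fun u =>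
    if u ∈ S.image π then Function.invFunOn π S u else 0
  have hgm : Measurable g := measurable_ite_finset (S.image π : Set _) (Finset.finite_toSet _) g
    fun x hx => if_neg (by simpa using hx)
  have hgπ : ∀ x ∈ S, g (π x) = x := by
    intro x hx
    simp only [g, if_pos (Finset.mem_image_of_mem π hx)]
    exact hinj.leftInvOn_invFunOn hx
  -- one-point Kirszbraun extensions
  have hK : ∀ v : EuclideanSpace ℝ (Fin m), ∃ z : EuclideanSpace ℝ (Fin d),
      ∀ x ∈ S, ‖x - z‖ ≤ L * ‖π x - v‖ := by
    intro v
    obtain ⟨z, hz⟩ := kirszbraun_point (fun x : S => (x : EuclideanSpace ℝ (Fin d)))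
      (fun x : S => L • (π x - v)) (fun x y => by
        rw [← smul_sub, sub_sub_sub_cancel_right, norm_smul, Real.norm_of_nonneg hL.le]
        exact hLS x x.2 y y.2)
    refine ⟨z, fun x hx => ?_⟩
    have := hz ⟨x, hx⟩
    rwa [norm_smul, Real.norm_of_nonneg hL.le, norm_sub_rev] at this
  choose G0 hG0 using hK
  let G : EuclideanSpace ℝ (Fin m) → EuclideanSpace ℝ (Fin d) := fun v =>
    if v ∈ t then G0 v else 0
  have hGm : Measurable G := measurable_ite_finset (t : Set _) (Finset.finite_toSet _) G
    fun x hx => if_neg (by simpa using hx)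
  have hW : ∀ i, wassersteinDist p (μs i) (ν'.map G) ≤
      L * wassersteinDist p ((μs i).map π) ν' := by
    intro i
    have := hprob i
    have : IsProbabilityMeasure ((μs i).map π) := Measure.isProbabilityMeasure_map hπm.aemeasurable
    have hsS : ∀ x ∈ s i, x ∈ S := fun x hx => Finset.mem_biUnion.2 ⟨i, Finset.mem_univ _, hx⟩
    have hae : ∀ᵐ x ∂(μs i), x ∈ s i := hs i
    refine wasserstein_push p L hp hL (μs i) _ ν' g G hgm hGm ?_ ((s i).image π) t ?_ ht0 ?_
    · rw [Measure.map_map hgm hπm]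
      have : g ∘ π =ᵐ[μs i] id := by
        filter_upwards [hae] with x hx using hgπ x (hsS x hx)
      rw [Measure.map_congr this, Measure.map_id]
    · rw [Measure.map_apply hπm (Finset.measurableSet _).compl]
      refine measure_mono_null ?_ (hs i)
      intro x hx hxs
      exact hx (Finset.mem_coe.2 (Finset.mem_image_of_mem π hxs))
    · intro u hu v hv
      obtain ⟨x, hx, rfl⟩ := Finset.mem_image.1 hu
      rw [hgπ x (hsS x hx)]
      simp only [G, if_pos hv]
      exact hG0 v x (hsS x hx)
  have hle : sInf {r : ℝ | ∃ ν : Measure (EuclideanSpace ℝ (Fin d)), IsProbabilityMeasure ν ∧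
        (∃ t : Finset (EuclideanSpace ℝ (Fin d)), t.card ≤ n ∧ ν (↑t)ᶜ = 0) ∧
        r = (1 / (k : ℝ)) * ∑ i, wassersteinDist p (μs i) ν ^ p} ≤
      (1 / (k : ℝ)) * ∑ i, wassersteinDist p (μs i) (ν'.map G) ^ p := by
    refine csInf_le ⟨0, ?_⟩ ⟨_, Measure.isProbabilityMeasure_map hGm.aemeasurable,
      ⟨t.image G, Finset.card_image_le.trans htn, ?_⟩, rfl⟩
    · rintro r ⟨ν, -, -, rfl⟩
      exact mul_nonneg (by positivity) (Finset.sum_nonneg fun i _ =>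
        Real.rpow_nonneg (wasserstein_nonneg _ _ _) _)
    · rw [Measure.map_apply hGm (Finset.measurableSet _).compl]
      refine measure_mono_null ?_ ht0
      intro x hx hxs
      exact hx (Finset.mem_coe.2 (Finset.mem_image_of_mem G hxs))
  refine hle.trans ?_
  rw [mul_assoc, Finset.sum_mul]
  refine mul_le_mul_of_nonneg_left (Finset.sum_le_sum fun i _ => ?_) (by positivity)
  rw [mul_comm, ← Real.mul_rpow hL.le (wasserstein_nonneg _ _ _)]
  exact Real.rpow_le_rpow (wasserstein_nonneg _ _ _) (hW i) hp0.le
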